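/- Let α, a, b, c, x₁, x₂ be real numbers with ρ := √(x₁² + x₂²) > 0, and let M = M(α,a,b,c,x₁,x₂) be the meridional EFG tensor. Then its three principal invariants are: trace(M) = α·a/ρ; the second invariant (sum of the three principal 2×2 minors) equals −(b² + c²) + (α−1)·(a/ρ)·(c + a/ρ); and det(M) = −(a/ρ)·(b² + c²) + (α−1)·(a/ρ)²·c. -/

import Mathlib

/-- The meridional EFG (electric field gradient) tensor, with `a = E_ρ`,
`b = ∂E_ρ/∂x₀`, `c = ∂E_ρ/∂ρ`, `ρ = √(x₁² + x₂²)`. -/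
noncomputable def meridionalEFG (α a b c x₁ x₂ : ℝ) : Matrix (Fin 3) (Fin 3) ℝ :=
  let ρ := Real.sqrt (x₁ ^ 2 + x₂ ^ 2)
  !![-c + (α - 1) * a / ρ, b * x₁ / ρ, b * x₂ / ρ;
     b * x₁ / ρ, c * x₁ ^ 2 / ρ ^ 2 + (a / ρ) * x₂ ^ 2 / ρ ^ 2, (c - a / ρ) * x₁ * x₂ / ρ ^ 2;
     b * x₂ / ρ, (c - a / ρ) * x₁ * x₂ / ρ ^ 2, c * x₂ ^ 2 / ρ ^ 2 + (a / ρ) * x₁ ^ 2 / ρ ^ 2]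

/-- The second principal invariant of a 3×3 matrix: the sum of its three
principal 2×2 minors. -/
def secondInvariant (M : Matrix (Fin 3) (Fin 3) ℝ) : ℝ :=
  (M 0 0 * M 1 1 - M 0 1 * M 1 0) + (M 0 0 * M 2 2 - M 0 2 * M 2 0)
    + (M 1 1 * M 2 2 - M 1 2 * M 2 1)

/-!
In the orthonormal cylindrical frame `(e₀, e_ρ, e_θ)` the tensor is block diagonal: a symmetric
`2 × 2` block in the meridional plane and the azimuthal eigenvalue `a / ρ`. The rotation about `e₀`
taking `(e₀, e₁, e₂)` to this frame has cosine `x₁ / ρ` and sine `x₂ / ρ`. Trace and determinant are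
conjugation invariant, hence so is the second invariant `(tr(M)² - tr(M²)) / 2`, and all three can
be read off in the cylindrical frame.
-/

theorem secondInvariant_eq_trace_sq_sub_trace_sq (M : Matrix (Fin 3) (Fin 3) ℝ) :
    secondInvariant M = (M.trace ^ 2 - (M ^ 2).trace) / 2 := by
  simp only [secondInvariant, sq M, Matrix.trace_fin_three, Matrix.mul_apply, Fin.sum_univ_three]
  ring

theorem secondInvariant_units_conj (U : (Matrix (Fin 3) (Fin 3) ℝ)ˣ)
    (M : Matrix (Fin 3) (Fin 3) ℝ) :
    secondInvariant (U.val * M * U⁻¹.val) = secondInvariant M := by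
  simp only [secondInvariant_eq_trace_sq_sub_trace_sq, Units.conj_pow, Matrix.trace_units_conj]

section CommRing

variable {R : Type*} [CommRing R]

/-- The rotation about the first coordinate axis of `R³` through the angle with cosine `u` and sine
`v`, as an invertible matrix. -/
def axialRotation (u v : R) (h : u ^ 2 + v ^ 2 = 1) : (Matrix (Fin 3) (Fin 3) R)ˣ where
  val := !![1, 0, 0; 0, u, -v; 0, v, u]
  inv := !![1, 0, 0; 0, u, v; 0, -v, u]
  val_inv := by
    rw [Matrix.mul_fin_three, Matrix.one_fin_three]
    congr! <;> grind
  inv_val := by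
    rw [Matrix.mul_fin_three, Matrix.one_fin_three]
    congr! <;> grind

/-- The meridional EFG tensor in the orthonormal cylindrical frame `(e₀, e_ρ, e_θ)`. The parameter
`k` is the azimuthal eigenvalue `E_ρ / ρ`. -/
def cylindricalEFG (α k b c : R) : Matrix (Fin 3) (Fin 3) R :=
  !![-c + (α - 1) * k, b, 0;
     b, c, 0;
     0, 0, k]

theorem trace_cylindricalEFG (α k b c : R) : (cylindricalEFG α k b c).trace = α * k := by
  rw [cylindricalEFG, Matrix.trace_fin_three_of]
  ring

theorem det_cylindricalEFG (α k b c : R) :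
    (cylindricalEFG α k b c).det = -k * (b ^ 2 + c ^ 2) + (α - 1) * k ^ 2 * c := by
  simp only [cylindricalEFG, Matrix.det_fin_three, Matrix.of_apply, Matrix.cons_val]
  ring

theorem axialRotation_conj_cylindricalEFG (α k b c : R) {u v : R} (h : u ^ 2 + v ^ 2 = 1) :
    (axialRotation u v h).val * cylindricalEFG α k b c * (axialRotation u v h)⁻¹.val =
      !![-c + (α - 1) * k, b * u, b * v;
         b * u, c * u ^ 2 + k * v ^ 2, (c - k) * u * v;
         b * v, (c - k) * u * v, c * v ^ 2 + k * u ^ 2] := by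
  simp only [axialRotation, Units.inv_mk, cylindricalEFG, Matrix.mul_fin_three]
  ring_nf

end CommRing

theorem secondInvariant_cylindricalEFG (α k b c : ℝ) :
    secondInvariant (cylindricalEFG α k b c) =
      -(b ^ 2 + c ^ 2) + (α - 1) * k * (c + k) := by
  simp only [cylindricalEFG, secondInvariant, Matrix.of_apply, Matrix.cons_val]
  ring

theorem div_sqrt_sq_add_div_sqrt_sq {x y : ℝ} (h : 0 < √(x ^ 2 + y ^ 2)) :
    (x / √(x ^ 2 + y ^ 2)) ^ 2 + (y / √(x ^ 2 + y ^ 2)) ^ 2 = 1 := by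
  rw [div_pow, div_pow, ← add_div, Real.sq_sqrt (by positivity), div_self (Real.sqrt_pos.mp h).ne']

theorem meridionalEFG_eq_axialRotation_conj (α a b c : ℝ) {x₁ x₂ : ℝ}
    (h : (x₁ / √(x₁ ^ 2 + x₂ ^ 2)) ^ 2 + (x₂ / √(x₁ ^ 2 + x₂ ^ 2)) ^ 2 = 1) :
    meridionalEFG α a b c x₁ x₂ =
      (axialRotation _ _ h).val * cylindricalEFG α (a / √(x₁ ^ 2 + x₂ ^ 2)) b c *
        (axialRotation _ _ h)⁻¹.val := by
  rw [axialRotation_conj_cylindricalEFG, meridionalEFG]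
  ring_nf

/-- the principal invariants of the meridional EFG tensor. -/
theorem meridionalEFG_invariants
    (α a b c x₁ x₂ : ℝ) (hρ : 0 < Real.sqrt (x₁ ^ 2 + x₂ ^ 2)) :
    (meridionalEFG α a b c x₁ x₂).trace = α * a / Real.sqrt (x₁ ^ 2 + x₂ ^ 2) ∧
    secondInvariant (meridionalEFG α a b c x₁ x₂) =
      -(b ^ 2 + c ^ 2) + (α - 1) * (a / Real.sqrt (x₁ ^ 2 + x₂ ^ 2)) *
        (c + a / Real.sqrt (x₁ ^ 2 + x₂ ^ 2)) ∧
    (meridionalEFG α a b c x₁ x₂).det =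
      -(a / Real.sqrt (x₁ ^ 2 + x₂ ^ 2)) * (b ^ 2 + c ^ 2)
        + (α - 1) * (a / Real.sqrt (x₁ ^ 2 + x₂ ^ 2)) ^ 2 * c := by
  have hunit := div_sqrt_sq_add_div_sqrt_sq hρ
  rw [meridionalEFG_eq_axialRotation_conj α a b c hunit]
  refine ⟨?trace, ?second, ?det⟩
  case trace => rw [Matrix.trace_units_conj, trace_cylindricalEFG, mul_div_assoc]
  case second => rw [secondInvariant_units_conj, secondInvariant_cylindricalEFG]
  case det => rw [Matrix.det_units_conj, det_cylindricalEFG]
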